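/- Let d ≥ 1 and k ≥ 1, let G = (V,D) be a graph with no isolated vertices whose edge set D is a k-fold R_d-circuit with principal partition 𝒜, let u, x be two distinct technicolour vertices of G, and let G*v be the cone of G over a new vertex v, so that E(G*v) is a k-fold R_{d+1}-circuit. If (a) there exists z ∈ N_G(u) ∩ N_G(x) such that uz and xz belong to different parts of 𝒜, or (b) N_G(u) ∖ {x} ≠ N_G(x) ∖ {u}, then the edges vu and vx belong to different parts of the principal partition of E(G*v). -/

import Mathlib

open scoped BigOperators

/-- The row of the `d`-dimensional rigidity matrix of a realisation `p : V → ℝ^d`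
indexed by the (unordered) edge `e`. -/
noncomputable def rigRow (d : ℕ) {V : Type*} [DecidableEq V]
    (p : V → Fin d → ℝ) (e : Sym2 V) : V × Fin d → ℝ :=
  Sym2.lift
    ⟨fun u v wi =>
        (((if wi.1 = u then (1 : ℝ) else 0) - (if wi.1 = v then (1 : ℝ) else 0)) *
          (p u wi.2 - p v wi.2)),
      fun u v => by funext wi; ring⟩ e

/-- A realisation is generic if the coordinates of the points form an algebraically
independent set over `ℚ`. -/
def Generic (d : ℕ) {V : Type*} (p : V → Fin d → ℝ) : Prop :=
  AlgebraicIndependent ℚ fun vi : V × Fin d => p vi.1 vi.2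

/-- `rrk d p F` : the rank of the set of rows of the rigidity matrix of `(K_V, p)`
indexed by the edges in `F`.  For generic `p` this is the rank function `r_d` of
the generic `d`-dimensional rigidity matroid. -/
noncomputable def rrk (d : ℕ) {V : Type*} [Fintype V] [DecidableEq V]
    (p : V → Fin d → ℝ) (F : Set (Sym2 V)) : ℕ :=
  Module.finrank ℝ (Submodule.span ℝ (rigRow d p '' F))

/-- `D` is a `k`-fold circuit (with respect to the realisation `p`) :
`r (D \ {f}) = r D` for every `f ∈ D`, and `r D = |D| - k`. -/
def IsKFoldCircuit (d : ℕ) {V : Type*} [Fintype V] [DecidableEq V]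
    (p : V → Fin d → ℝ) (D : Finset (Sym2 V)) (k : ℕ) : Prop :=
  (∀ f ∈ D, rrk d p (↑D \ {f}) = rrk d p ↑D) ∧ rrk d p ↑D + k = D.card

/-- An `R_d`-circuit: `r C = |C| - 1` and `r (C \ {f}) = r C` for all `f ∈ C`. -/
def IsCircuit (d : ℕ) {V : Type*} [Fintype V] [DecidableEq V]
    (p : V → Fin d → ℝ) (C : Finset (Sym2 V)) : Prop :=
  IsKFoldCircuit d p C 1

/-- `A` is a part of the principal partition of the `k`-fold circuit `D`:
the parts are the sets `D \ B` where `B` runs over the `(k-1)`-fold circuits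
contained in `D`. -/
def IsPrincipalPart (d : ℕ) {V : Type*} [Fintype V] [DecidableEq V]
    (p : V → Fin d → ℝ) (D : Finset (Sym2 V)) (k : ℕ) (A : Finset (Sym2 V)) : Prop :=
  ∃ B ⊆ D, IsKFoldCircuit d p B (k - 1) ∧ A = D \ B

/-- Closure in the rigidity matroid: all edges of `K_V` whose addition to `F`
does not increase the rank. -/
def rcl (d : ℕ) {V : Type*} [Fintype V] [DecidableEq V]
    (p : V → Fin d → ℝ) (F : Set (Sym2 V)) : Set (Sym2 V) :=
  {e | ¬ e.IsDiag ∧ rrk d p (insert e F) = rrk d p F}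

/-- A `k`-fold circuit `D` with principal partition `A_1, …, A_ℓ` is balanced if
`r_d (⋂ i, cl_d (D \ A_i)) = ℓ - k`. -/
def IsBalanced (d : ℕ) {V : Type*} [Fintype V] [DecidableEq V]
    (p : V → Fin d → ℝ) (D : Finset (Sym2 V)) (k : ℕ) : Prop :=
  rrk d p (⋂ A ∈ {A | IsPrincipalPart d p D k A}, rcl d p ↑(D \ A)) + k =
    Set.ncard {A | IsPrincipalPart d p D k A}

/-- A vertex is monochromatic if all edges of `D` incident with it lie in a single
part of the principal partition (and technicolour otherwise). -/
def Monochromatic (d : ℕ) {V : Type*} [Fintype V] [DecidableEq V]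
    (p : V → Fin d → ℝ) (D : Finset (Sym2 V)) (k : ℕ) (w : V) : Prop :=
  ∃ A, IsPrincipalPart d p D k A ∧ ∀ e ∈ D, w ∈ e → e ∈ A

/-- The graph `(W, E)` is `R_d`-rigid: it is a complete graph on at most `d+1`
vertices, or `r_d(E) = d|W| - (d+1 choose 2)`. -/
def IsRigidOn (d : ℕ) {V : Type*} [Fintype V] [DecidableEq V]
    (p : V → Fin d → ℝ) (W : Finset V) (E : Finset (Sym2 V)) : Prop :=
  (W.card ≤ d + 1 ∧ ∀ u ∈ W, ∀ w ∈ W, u ≠ w → s(u, w) ∈ E) ∨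
    (rrk d p ↑E : ℤ) + ((d + 1).choose 2 : ℤ) = (d : ℤ) * (W.card : ℤ)

/-- The edge set of the cone of (the graph with edge set) `D` over a new vertex,
realised as `none : Option V`. -/
def coneEdges {V : Type*} [Fintype V] [DecidableEq V] (D : Finset (Sym2 V)) :
    Finset (Sym2 (Option V)) :=
  D.image (Sym2.map Option.some) ∪
    Finset.univ.image fun u : V => s((Option.some u : Option V), (none : Option V))

/-- The degree of the vertex `w` in the edge set `D`. -/
def degIn {V : Type*} [Fintype V] [DecidableEq V] (D : Finset (Sym2 V)) (w : V) : ℕ :=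
  (D.filter fun e => w ∈ e).card

/-- The set of vertices incident with an edge of `F`. -/
def esupp {V : Type*} [Fintype V] [DecidableEq V] (F : Finset (Sym2 V)) : Finset V :=
  Finset.univ.filter fun w => ∃ e ∈ F, w ∈ e

noncomputable section ConeProof

/-- Rigidity row with polynomial entries. -/
def polyRow (d : ℕ) {V : Type*} [DecidableEq V] (e : Sym2 V) (wi : V × Fin d) :
    MvPolynomial (V × Fin d) ℚ :=
  Sym2.lift
    ⟨fun u v =>
        (((if wi.1 = u then (1 : MvPolynomial (V × Fin d) ℚ) else 0) -
          (if wi.1 = v then 1 else 0)) *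
          (MvPolynomial.X (u, wi.2) - MvPolynomial.X (v, wi.2))),
      fun u v => by ring⟩ e

theorem aeval_polyRow (d : ℕ) {V : Type*} [DecidableEq V] (q : V → Fin d → ℝ)
    (e : Sym2 V) (wi : V × Fin d) :
    MvPolynomial.aeval (fun vi : V × Fin d => q vi.1 vi.2) (polyRow d e wi) =
      rigRow d q e wi := by
  induction e using Sym2.ind with
  | _ u v =>
    simp only [polyRow, rigRow, Sym2.lift_mk, map_mul, map_sub, MvPolynomial.aeval_X]
    congr 1
    split_ifs <;> simp

theorem rows_indep_iff {m n : Type*} [Fintype m] [DecidableEq m] [Fintype n]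
    (A : Matrix m n ℝ) : LinearIndependent ℝ A.row ↔ (A * A.transpose).det ≠ 0 := by
  rw [← isUnit_iff_ne_zero, ← Matrix.isUnit_iff_isUnit_det,
    ← Matrix.linearIndependent_rows_iff_isUnit]
  rw [linearIndependent_iff_card_eq_finrank_span, linearIndependent_iff_card_eq_finrank_span,
    Set.finrank, Set.finrank, ← Matrix.rank_eq_finrank_span_row, ← Matrix.rank_eq_finrank_span_row,
    Matrix.rank_self_mul_transpose]

theorem rrk_le_generic (n : ℕ) {V : Type*} [Fintype V] [DecidableEq V]
    (q q' : V → Fin n → ℝ) (hq : Generic n q) (F : Set (Sym2 V)) :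
    rrk n q' F ≤ rrk n q F := by
  classical
  obtain ⟨κ, a, ha, hspan, hind⟩ :=
    exists_linearIndependent' ℝ (fun e : F => rigRow n q' e)
  haveI : Finite κ := Finite.of_injective a ha
  haveI := Fintype.ofFinite κ
  let P : Matrix κ (V × Fin n) (MvPolynomial (V × Fin n) ℚ) :=
    Matrix.of fun i wi => polyRow n (a i : Sym2 V) wi
  let M : (V → Fin n → ℝ) → Matrix κ (V × Fin n) ℝ := fun q =>
    Matrix.of fun i wi => rigRow n q (a i : Sym2 V) wi
  have hdet : ∀ q : V → Fin n → ℝ,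
      MvPolynomial.aeval (fun vi : V × Fin n => q vi.1 vi.2) (P * P.transpose).det =
        (M q * (M q).transpose).det := by
    intro q
    rw [AlgHom.map_det]
    congr 1
    ext i j
    simp [P, M, Matrix.mul_apply, aeval_polyRow]
  have h1 : LinearIndependent ℝ (M q').row := hind
  rw [rows_indep_iff, ← hdet] at h1
  have h2 : (P * P.transpose).det ≠ 0 := by
    intro h
    rw [h] at h1
    simp at h1
  have h3 : LinearIndependent ℝ (M q).row := by
    rw [rows_indep_iff, ← hdet]
    intro h
    exact h2 ((injective_iff_map_eq_zero _).1 hq _ h)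
  have e1 : rrk n q' F = Fintype.card κ := by
    rw [rrk, Set.image_eq_range, ← hspan]
    exact finrank_span_eq_card hind
  rw [e1, ← finrank_span_eq_card h3]
  apply Submodule.finrank_mono
  apply Submodule.span_mono
  rintro _ ⟨i, rfl⟩
  exact ⟨a i, (a i).2, rfl⟩

/-- Space of equilibrium stresses supported on `F`. -/
def Stress (d : ℕ) {V : Type*} [Fintype V] [DecidableEq V]
    (p : V → Fin d → ℝ) (F : Finset (Sym2 V)) : Submodule ℝ (Sym2 V → ℝ) where
  carrier := {σ | (∀ e ∉ F, σ e = 0) ∧ ∑ e, σ e • rigRow d p e = 0}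
  zero_mem' := by simp
  add_mem' := by
    rintro a b ⟨ha, ha'⟩ ⟨hb, hb'⟩
    refine ⟨fun e he => by simp [ha e he, hb e he], ?_⟩
    simp [add_smul, Finset.sum_add_distrib, ha', hb']
  smul_mem' := by
    rintro c a ⟨ha, ha'⟩
    refine ⟨fun e he => by simp [ha e he], ?_⟩
    simp [mul_smul, ← Finset.smul_sum, ha']

section
variable {d : ℕ} {V : Type*} [Fintype V] [DecidableEq V] {p : V → Fin d → ℝ}

theorem mem_stress {F : Finset (Sym2 V)} {σ : Sym2 V → ℝ} :
    σ ∈ Stress d p F ↔ (∀ e ∉ F, σ e = 0) ∧ ∑ e, σ e • rigRow d p e = 0 := Iff.rfl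

theorem finrank_stress (F : Finset (Sym2 V)) :
    Module.finrank ℝ (Stress d p F) + rrk d p ↑F = F.card := by
  let φ : (F → ℝ) →ₗ[ℝ] (V × Fin d → ℝ) :=
    Fintype.linearCombination ℝ (fun e : F => rigRow d p e)
  have h1 := LinearMap.finrank_range_add_finrank_ker φ
  have h2 : LinearMap.range φ = Submodule.span ℝ (rigRow d p '' ↑F) := by
    rw [Fintype.range_linearCombination, Set.image_eq_range]
    rfl
  have key : ∀ σ : Sym2 V → ℝ, (∀ e ∉ F, σ e = 0) →
      ∑ e, σ e • rigRow d p e = φ (fun e => σ e) := by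
    intro σ hσ
    rw [Fintype.linearCombination_apply]
    rw [Finset.sum_coe_sort F (fun e => σ e • rigRow d p e)]
    symm
    apply Finset.sum_subset (Finset.subset_univ _)
    intro e _ he
    simp [hσ e he]
  let ψ : Stress d p F ≃ₗ[ℝ] LinearMap.ker φ :=
    { toFun := fun σ => ⟨fun e => σ.1 e, by
        rw [LinearMap.mem_ker, ← key σ.1 σ.2.1]; exact σ.2.2⟩
      map_add' := fun a b => rfl
      map_smul' := fun a b => rfl
      invFun := fun τ => ⟨fun e => if h : e ∈ F then τ.1 ⟨e, h⟩ else 0, by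
        have h0 : ∀ e ∉ F, (fun e => if h : e ∈ F then τ.1 ⟨e, h⟩ else 0) e = 0 := by
          intro e he; simp [he]
        refine ⟨h0, ?_⟩
        rw [key _ h0]
        have := τ.2
        rw [LinearMap.mem_ker] at this
        rw [← this]
        congr 1
        ext e
        simp⟩
      left_inv := by
        intro σ
        ext e
        by_cases h : e ∈ F
        · simp [h]
        · simp [h, σ.2.1 e h]
      right_inv := by
        intro τ
        ext e
        simp }
  rw [ψ.finrank_eq, rrk, ← h2, add_comm, h1]
  simp

theorem stress_mono {F F' : Finset (Sym2 V)} (h : F ⊆ F') : Stress d p F ≤ Stress d p F' :=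
  fun _ hσ => ⟨fun e he => hσ.1 e (fun h' => he (h h')), hσ.2⟩

theorem rrk_mono {F F' : Set (Sym2 V)} (h : F ⊆ F') : rrk d p F ≤ rrk d p F' :=
  Submodule.finrank_mono (Submodule.span_mono (Set.image_mono h))

theorem noncoloop_iff {F : Finset (Sym2 V)} {f : Sym2 V} (hf : f ∈ F) :
    rrk d p (↑F \ {f}) = rrk d p ↑F ↔ ∃ σ ∈ Stress d p F, σ f ≠ 0 := by
  have h1 := finrank_stress (p := p) F
  have h2 := finrank_stress (p := p) (F.erase f)
  rw [Finset.card_erase_of_mem hf, Finset.coe_erase] at h2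
  have hpos : 0 < F.card := Finset.card_pos.2 ⟨f, hf⟩
  constructor
  · intro h
    by_contra! hc
    have : Stress d p F ≤ Stress d p (F.erase f) := by
      intro σ hσ
      refine ⟨fun e he => ?_, hσ.2⟩
      by_cases hef : e = f
      · rw [hef]; exact hc σ hσ
      · exact hσ.1 e (fun h' => he (Finset.mem_erase.2 ⟨hef, h'⟩))
    have := Submodule.finrank_mono this
    omega
  · rintro ⟨σ, hσ, hne⟩
    have hlt : Stress d p (F.erase f) < Stress d p F := by
      refine lt_of_le_of_ne (stress_mono (Finset.erase_subset _ _)) ?_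
      intro h
      rw [← h] at hσ
      exact hne (hσ.1 f (by simp))
    have := Submodule.finrank_lt_finrank_of_lt hlt
    have := rrk_mono (p := p) (F := ↑F \ {f}) (F' := ↑F) Set.sdiff_subset
    omega

theorem kfold_iff {F : Finset (Sym2 V)} {k : ℕ} :
    IsKFoldCircuit d p F k ↔
      (∀ f ∈ F, ∃ σ ∈ Stress d p F, σ f ≠ 0) ∧ Module.finrank ℝ (Stress d p F) = k := by
  have h1 := finrank_stress (p := p) F
  unfold IsKFoldCircuit
  refine and_congr (forall₂_congr fun f hf => noncoloop_iff hf) ?_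
  omega

/-- every edge is in a part containing all edges with parallel functionals -/
theorem exists_part {D : Finset (Sym2 V)} {k : ℕ} (hD : IsKFoldCircuit d p D k)
    (e : Sym2 V) (he : e ∈ D) :
    ∃ A, IsPrincipalPart d p D k A ∧ ∀ f ∈ D,
      (∀ σ ∈ Stress d p D, ∀ τ ∈ Stress d p D, σ e * τ f = τ e * σ f) → f ∈ A := by
  classical
  rw [kfold_iff] at hD
  obtain ⟨hD1, hD2⟩ := hD
  obtain ⟨σ₀, hσ₀, hne⟩ := hD1 e he
  let B : Finset (Sym2 V) := D.filter fun g => ∃ σ ∈ Stress d p D, σ e = 0 ∧ σ g ≠ 0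
  have heB : e ∉ B := by
    intro h
    obtain ⟨_, σ, _, h1, h2⟩ := Finset.mem_filter.1 h
    exact h2 h1
  have hBD : B ⊆ D := Finset.filter_subset _ _
  have hmem : ∀ σ, σ ∈ Stress d p B ↔ σ ∈ Stress d p D ∧ σ e = 0 := by
    intro σ
    constructor
    · intro h
      exact ⟨stress_mono hBD h, h.1 e heB⟩
    · rintro ⟨h, h0⟩
      refine ⟨fun g hg => ?_, h.2⟩
      by_contra hc
      apply hg
      refine Finset.mem_filter.2 ⟨?_, σ, h, h0, hc⟩
      by_contra hgD
      exact hc (h.1 g hgD)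
  refine ⟨D \ B, ⟨B, hBD, ?_, rfl⟩, ?_⟩
  · rw [kfold_iff]
    constructor
    · intro f hf
      obtain ⟨_, σ, h0, h1, h2⟩ := Finset.mem_filter.1 hf
      exact ⟨σ, (hmem σ).2 ⟨h0, h1⟩, h2⟩
    · let ev : Stress d p D →ₗ[ℝ] ℝ := (LinearMap.proj e).comp (Stress d p D).subtype
      have hr : LinearMap.range ev = ⊤ := by
        rw [LinearMap.range_eq_top]
        intro c
        refine ⟨(c / σ₀ e) • ⟨σ₀, hσ₀⟩, ?_⟩
        simp [ev, hne]
      have hrn := LinearMap.finrank_range_add_finrank_ker ev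
      rw [hr, finrank_top, Module.finrank_self, hD2] at hrn
      have hk : (LinearMap.ker ev).map (Stress d p D).subtype = Stress d p B := by
        ext σ
        rw [hmem]
        simp [ev, LinearMap.mem_ker, and_comm]
      rw [← hk, Submodule.finrank_map_subtype_eq]
      omega
  · intro f hf hpar
    refine Finset.mem_sdiff.2 ⟨hf, fun hfB => ?_⟩
    obtain ⟨_, σ, h0, h1, h2⟩ := Finset.mem_filter.1 hfB
    have := hpar σ₀ hσ₀ σ h0
    rw [h1, zero_mul] at this
    exact (mul_ne_zero hne h2) this

theorem sum_rigRow (σ : Sym2 V → ℝ) (w : V) (i : Fin d) :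
    (∑ e, σ e • rigRow d p e) (w, i) = ∑ y, σ s(w, y) * (p w i - p y i) := by
  rw [Finset.sum_apply]
  symm
  apply Fintype.sum_of_injective (fun y => s(w, y))
  · intro a b h
    exact Sym2.congr_right.1 h
  · intro e he
    induction e using Sym2.ind with
    | _ a b =>
      have h1 : w ≠ a := by rintro rfl; exact he ⟨b, rfl⟩
      have h2 : w ≠ b := by rintro rfl; exact he ⟨a, Sym2.eq_swap⟩
      simp [rigRow, h1, h2]
  · intro y
    by_cases h : w = y
    · subst h; simp [rigRow]
    · simp [rigRow, h]

theorem mem_stress' {F : Finset (Sym2 V)} {σ : Sym2 V → ℝ} :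
    σ ∈ Stress d p F ↔ (∀ e ∉ F, σ e = 0) ∧
      ∀ w i, ∑ y, σ s(w, y) * (p w i - p y i) = 0 := by
  rw [mem_stress]
  refine and_congr Iff.rfl ?_
  constructor
  · intro h w i
    rw [← sum_rigRow, h]; rfl
  · intro h
    ext ⟨w, i⟩
    rw [sum_rigRow, h]; rfl

/-- the functional of the cone edge at `u` -/
def coneFun (s : V → ℝ) (u : V) : (Sym2 V → ℝ) →ₗ[ℝ] ℝ where
  toFun σ := ∑ y, σ s(u, y) * (s u - s y)
  map_add' a b := by simp [add_mul, Finset.sum_add_distrib]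
  map_smul' c a := by simp [mul_assoc, Finset.mul_sum]

theorem coneFun_apply (s : V → ℝ) (u : V) (σ : Sym2 V → ℝ) :
    coneFun s u σ = ∑ y, σ s(u, y) * (s u - s y) := rfl

/-- special realisation of the cone -/
def coneReal (p : V → Fin d → ℝ) (s : V → ℝ) : Option V → Fin (d + 1) → ℝ
  | none => 0
  | some w => fun i => (s w)⁻¹ * (Fin.cons 1 (p w) : Fin (d + 1) → ℝ) i

/-- cone stress to base stress -/
def coneMap (s : V → ℝ) : (Sym2 (Option V) → ℝ) →ₗ[ℝ] (Sym2 V → ℝ) where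
  toFun ω e := ω (e.map some) * (Sym2.lift ⟨fun a b => (s a)⁻¹ * (s b)⁻¹,
    fun a b => mul_comm _ _⟩ e)
  map_add' a b := by ext e; simp [add_mul]
  map_smul' c a := by ext e; simp [mul_assoc]

theorem coneMap_apply (s : V → ℝ) (ω : Sym2 (Option V) → ℝ) (a b : V) :
    coneMap s ω s(a, b) = ω s(some a, some b) * ((s a)⁻¹ * (s b)⁻¹) := rfl

theorem cone_eq0 {s : V → ℝ} {B : Finset (Sym2 (Option V))} {ω : Sym2 (Option V) → ℝ}
    (h : ω ∈ Stress (d + 1) (coneReal p s) B) (w : V) :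
    ω s(some w, none) * (s w)⁻¹ +
      ∑ y, ω s(some w, some y) * ((s w)⁻¹ - (s y)⁻¹) = 0 := by
  have := (mem_stress'.1 h).2 (some w) 0
  rw [Fintype.sum_option] at this
  simpa [coneReal] using this

theorem cone_eqS {s : V → ℝ} {B : Finset (Sym2 (Option V))} {ω : Sym2 (Option V) → ℝ}
    (h : ω ∈ Stress (d + 1) (coneReal p s) B) (w : V) (i : Fin d) :
    ω s(some w, none) * ((s w)⁻¹ * p w i) +
      ∑ y, ω s(some w, some y) * ((s w)⁻¹ * p w i - (s y)⁻¹ * p y i) = 0 := by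
  have := (mem_stress'.1 h).2 (some w) i.succ
  rw [Fintype.sum_option] at this
  simpa [coneReal] using this

theorem coneMap_mem {D : Finset (Sym2 V)} {s : V → ℝ} {B : Finset (Sym2 (Option V))}
    (hB : B ⊆ coneEdges D) {ω : Sym2 (Option V) → ℝ}
    (h : ω ∈ Stress (d + 1) (coneReal p s) B) : coneMap s ω ∈ Stress d p D := by
  rw [mem_stress']
  constructor
  · intro e he
    induction e using Sym2.ind with
    | _ a b =>
      rw [coneMap_apply, h.1, zero_mul]
      intro hmem
      have := hB hmem
      simp only [coneEdges, Finset.mem_union, Finset.mem_image] at this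
      rcases this with ⟨e', he', heq⟩ | ⟨c, _, heq⟩
      · have : e' = s(a, b) := Sym2.map.injective (Option.some_injective V) heq
        exact he (this ▸ he')
      · simp at heq
  · intro w i
    have h0 := cone_eq0 h w
    have h1 := cone_eqS h w i
    have h2 : ∑ y, ω s(some w, some y) * ((s w)⁻¹ * p w i - (s y)⁻¹ * p y i) -
        (∑ y, ω s(some w, some y) * ((s w)⁻¹ - (s y)⁻¹)) * p w i = 0 := by
      linear_combination h1 - p w i * h0
    rw [Finset.sum_mul, ← Finset.sum_sub_distrib] at h2
    have h3 := congrArg (fun t => (s w)⁻¹ * t) h2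
    simp only [mul_zero, Finset.mul_sum] at h3
    rw [← h3]
    apply Finset.sum_congr rfl
    intro y _
    rw [coneMap_apply]
    ring

theorem coneMap_inj {D : Finset (Sym2 V)} {s : V → ℝ} (hs : ∀ w, s w ≠ 0)
    {B : Finset (Sym2 (Option V))}
    (hB : B ⊆ coneEdges D) {ω : Sym2 (Option V) → ℝ}
    (h : ω ∈ Stress (d + 1) (coneReal p s) B) (h0 : coneMap s ω = 0) : ω = 0 := by
  have h1 : ∀ a b : V, ω s(some a, some b) = 0 := by
    intro a b
    have := congrFun h0 s(a, b)
    rw [coneMap_apply] at this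
    simpa [hs] using this
  have h2 : ∀ a : V, ω s(some a, none) = 0 := by
    intro a
    have := cone_eq0 h a
    simpa [h1, hs] using this
  ext e
  induction e using Sym2.ind with
  | _ a b =>
    rcases a with _ | a <;> rcases b with _ | b
    · apply h.1
      intro hmem
      have := hB hmem
      simp only [coneEdges, Finset.mem_union, Finset.mem_image] at this
      rcases this with ⟨e', he', heq⟩ | ⟨c, _, heq⟩
      · induction e' using Sym2.ind with
        | _ a b => simp at heq
      · simp at heq
    · rw [Sym2.eq_swap]; exact h2 b
    · exact h2 a
    · exact h1 a b

theorem coneFun_coneMap {s : V → ℝ} (hs : ∀ w, s w ≠ 0)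
    {B : Finset (Sym2 (Option V))} {ω : Sym2 (Option V) → ℝ}
    (h : ω ∈ Stress (d + 1) (coneReal p s) B) (u : V)
    (hu : s(some u, none) ∉ B) : coneFun s u (coneMap s ω) = 0 := by
  have h0 := cone_eq0 h u
  rw [h.1 _ hu, zero_mul, zero_add] at h0
  rw [coneFun_apply, ← neg_eq_zero, ← h0, ← Finset.sum_neg_distrib]
  apply Finset.sum_congr rfl
  intro y _
  rw [coneMap_apply]
  have := hs u
  have := hs y
  field_simp
  ring

theorem cone_dependent {D : Finset (Sym2 V)} {k : ℕ} (hk : 1 ≤ k)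
    (hdim : Module.finrank ℝ (Stress d p D) = k)
    (q : Option V → Fin (d+1) → ℝ) (hq : Generic (d+1) q)
    {B : Finset (Sym2 (Option V))} (hB : B ⊆ coneEdges D)
    (hBk : IsKFoldCircuit (d+1) q B (k - 1)) (u x : V)
    (hu : s(some u, none) ∉ B) (hx : s(some x, none) ∉ B)
    (s : V → ℝ) (hs : ∀ w, s w ≠ 0) :
    ∀ σ ∈ Stress d p D, ∀ τ ∈ Stress d p D,
      coneFun s u σ * coneFun s x τ = coneFun s u τ * coneFun s x σ := by
  intro σ hσ τ hτ
  by_contra hne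
  have hge : k - 1 ≤ Module.finrank ℝ (Stress (d+1) (coneReal p s) B) := by
    have h1 := finrank_stress (p := coneReal p s) B
    have h2 := rrk_le_generic (d+1) q (coneReal p s) hq ↑B
    have h3 := hBk.2
    omega
  let L : Stress d p D →ₗ[ℝ] ℝ × ℝ :=
    ((coneFun s u).prod (coneFun s x)).comp (Stress d p D).subtype
  have hL : LinearMap.range L = ⊤ := by
    rw [LinearMap.range_eq_top]
    rintro ⟨a, b⟩
    set σ1 := coneFun s u σ with e1
    set σ2 := coneFun s x σ with e2
    set τ1 := coneFun s u τ with e3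
    set τ2 := coneFun s x τ with e4
    have hdet : σ1 * τ2 - τ1 * σ2 ≠ 0 := sub_ne_zero.2 hne
    refine ⟨((a * τ2 - b * τ1) / (σ1 * τ2 - τ1 * σ2)) • ⟨σ, hσ⟩ +
      ((b * σ1 - a * σ2) / (σ1 * τ2 - τ1 * σ2)) • ⟨τ, hτ⟩, ?_⟩
    ext
    · change coneFun s u (((a * τ2 - b * τ1) / (σ1 * τ2 - τ1 * σ2)) • σ +
        ((b * σ1 - a * σ2) / (σ1 * τ2 - τ1 * σ2)) • τ) = _
      simp only [map_add, map_smul, smul_eq_mul, ← e1, ← e2, ← e3, ← e4]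
      rw [div_mul_eq_mul_div, div_mul_eq_mul_div, ← add_div, div_eq_iff hdet]
      ring
    · change coneFun s x (((a * τ2 - b * τ1) / (σ1 * τ2 - τ1 * σ2)) • σ +
        ((b * σ1 - a * σ2) / (σ1 * τ2 - τ1 * σ2)) • τ) = _
      simp only [map_add, map_smul, smul_eq_mul, ← e1, ← e2, ← e3, ← e4]
      rw [div_mul_eq_mul_div, div_mul_eq_mul_div, ← add_div, div_eq_iff hdet]
      ring
  have hrn := LinearMap.finrank_range_add_finrank_ker L
  rw [hL, finrank_top, Module.finrank_prod, Module.finrank_self, hdim] at hrn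
  let T : Stress (d+1) (coneReal p s) B →ₗ[ℝ] LinearMap.ker L :=
    { toFun := fun ω => ⟨⟨coneMap s ω.1, coneMap_mem hB ω.2⟩, by
        rw [LinearMap.mem_ker]
        ext
        · exact coneFun_coneMap hs ω.2 u hu
        · exact coneFun_coneMap hs ω.2 x hx⟩
      map_add' := fun a b => by
        ext1; ext1; exact map_add (coneMap s) a.1 b.1
      map_smul' := fun c a => by
        ext1; ext1; exact map_smul (coneMap s) c a.1 }
  have hT : Function.Injective T := by
    rw [injective_iff_map_eq_zero]
    intro ω hω
    ext1
    apply coneMap_inj hs hB ω.2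
    exact congrArg (fun z => z.1.1) hω
  have := LinearMap.finrank_le_finrank_of_injective hT
  omega

theorem cone_dependent' {D : Finset (Sym2 V)} {k : ℕ} (hk : 1 ≤ k)
    (hdim : Module.finrank ℝ (Stress d p D) = k)
    (q : Option V → Fin (d+1) → ℝ) (hq : Generic (d+1) q)
    {B : Finset (Sym2 (Option V))} (hB : B ⊆ coneEdges D)
    (hBk : IsKFoldCircuit (d+1) q B (k - 1)) (u x : V)
    (hu : s(some u, none) ∉ B) (hx : s(some x, none) ∉ B)
    (s : V → ℝ) :
    ∀ σ ∈ Stress d p D, ∀ τ ∈ Stress d p D,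
      coneFun s u σ * coneFun s x τ = coneFun s u τ * coneFun s x σ := by
  have hc : ∀ w, s w + (1 + ∑ y, |s y|) ≠ 0 := by
    intro w
    have h1 := Finset.single_le_sum (f := fun y => |s y|) (fun y _ => abs_nonneg (s y))
      (Finset.mem_univ w)
    have h2 := neg_abs_le (s w)
    linarith
  have := cone_dependent hk hdim q hq hB hBk u x hu hx (fun w => s w + (1 + ∑ y, |s y|)) hc
  simpa [coneFun_apply] using this

theorem coneFun_single (u y : V) (h : u ≠ y) (σ : Sym2 V → ℝ) :
    coneFun (Pi.single y 1) u σ = - σ s(u, y) := by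
  rw [coneFun_apply, Finset.sum_eq_single y]
  · simp [h]
  · intro b _ hb
    simp [h, hb]
  · simp

theorem coneFun_add (s t : V → ℝ) (u : V) (σ : Sym2 V → ℝ) :
    coneFun (s + t) u σ = coneFun s u σ + coneFun t u σ := by
  simp only [coneFun_apply, ← Finset.sum_add_distrib, Pi.add_apply]
  apply Finset.sum_congr rfl
  intro y _
  ring

/-- Case (b), one direction. -/
theorem case_b {D : Finset (Sym2 V)} (hsimple : ∀ e ∈ D, ¬ e.IsDiag) {k : ℕ}
    (hD : IsKFoldCircuit d p D k) (u x : V)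
    (hdep : ∀ s : V → ℝ, ∀ σ ∈ Stress d p D, ∀ τ ∈ Stress d p D,
      coneFun s u σ * coneFun s x τ = coneFun s u τ * coneFun s x σ)
    (w : V) (huw : s(u, w) ∈ D) (hwx : w ≠ x) (hxw : s(x, w) ∉ D) :
    Monochromatic d p D k x := by
  obtain ⟨A, hA, hall⟩ := exists_part hD _ huw
  refine ⟨A, hA, fun e he hxe => hall e he ?_⟩
  obtain ⟨y, rfl⟩ := Sym2.mem_iff_exists.1 hxe
  have hxy : x ≠ y := fun h => hsimple _ he (by simp [h])
  have huw' : u ≠ w := fun h => hsimple _ huw (by simp [h])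
  intro σ hσ τ hτ
  have h1 := hdep (Pi.single y 1) σ hσ τ hτ
  have h2 := hdep (Pi.single y 1 + Pi.single w 1) σ hσ τ hτ
  simp only [coneFun_add, coneFun_single u w huw', coneFun_single x w hwx.symm,
    coneFun_single x y hxy, hσ.1 _ hxw, hτ.1 _ hxw] at h1 h2
  linear_combination h2 - h1

end

end ConeProof

/-- Theorem 4.3: cone edges at two technicolour vertices lie in different parts of
the principal partition of the cone, under condition (a) or (b). -/
theorem cone_technicolour_different_parts
    (d k : ℕ) (hd : 1 ≤ d) (hk : 1 ≤ k)
    {V : Type*} [Fintype V] [DecidableEq V]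
    (D : Finset (Sym2 V)) (hsimple : ∀ e ∈ D, ¬ e.IsDiag)
    (hcov : ∀ w : V, ∃ e ∈ D, w ∈ e)
    (p : V → Fin d → ℝ) (hp : Generic d p)
    (q : Option V → Fin (d+1) → ℝ) (hq : Generic (d+1) q)
    (hD : IsKFoldCircuit d p D k)
    (u x : V) (hux : u ≠ x)
    (htu : ¬ Monochromatic d p D k u) (htx : ¬ Monochromatic d p D k x)
    (hcase :
      (∃ z : V, s(u, z) ∈ D ∧ s(x, z) ∈ D ∧
        ¬ ∃ A : Finset (Sym2 V), IsPrincipalPart d p D k A ∧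
          s(u, z) ∈ A ∧ s(x, z) ∈ A) ∨
      ({w : V | s(u, w) ∈ D} \ {x} ≠ {w : V | s(x, w) ∈ D} \ {u})) :
    ¬ ∃ A' : Finset (Sym2 (Option V)),
        IsPrincipalPart (d+1) q (coneEdges D) k A' ∧
        s((Option.some u : Option V), (none : Option V)) ∈ A' ∧
        s((Option.some x : Option V), (none : Option V)) ∈ A' := by
  rintro ⟨A', ⟨B, hB, hBk, rfl⟩, huA, hxA⟩
  have hdim := (kfold_iff.1 hD).2
  have hu := (Finset.mem_sdiff.1 huA).2
  have hx := (Finset.mem_sdiff.1 hxA).2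
  have hdep := fun s => cone_dependent' hk hdim q hq hB hBk u x hu hx s
  have hdep' := fun s => cone_dependent' hk hdim q hq hB hBk x u hx hu s
  rcases hcase with ⟨z, huz, hxz, hno⟩ | hne
  · apply hno
    obtain ⟨A, hA, hall⟩ := exists_part hD _ huz
    have huz' : u ≠ z := fun h => hsimple _ huz (by simp [h])
    have hxz' : x ≠ z := fun h => hsimple _ hxz (by simp [h])
    refine ⟨A, hA, hall _ huz fun σ _ τ _ => mul_comm _ _, hall _ hxz fun σ hσ τ hτ => ?_⟩
    have := hdep (Pi.single z 1) σ hσ τ hτ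
    simpa only [coneFun_single u z huz', coneFun_single x z hxz', neg_mul_neg] using this
  · apply hne
    ext w
    simp only [Set.mem_sdiff, Set.mem_ofPred_eq, Set.mem_singleton_iff]
    constructor
    · rintro ⟨h1, h2⟩
      refine ⟨?_, fun h => hsimple _ h1 (by simp [h])⟩
      by_contra h3
      exact htx (case_b hsimple hD u x hdep w h1 h2 h3)
    · rintro ⟨h1, h2⟩
      refine ⟨?_, fun h => hsimple _ h1 (by simp [h])⟩
      by_contra h3
      exact htu (case_b hsimple hD x u hdep' w h1 h2 h3)
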